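/- Suppose ρ_m > ρ_l > 0, u_l > 0, u_m = 0, and σ₋ satisfies σ₋(ρ_l − ρ_m) = ρ_l u_l and σ₋ ρ_l u_l = ρ_l u_l² + ρ_l − ρ_m (isothermal pressure p = ρ). Then −1 < σ₋ < u_l − 1. -/

import Mathlib

/-!
In the frame of the shock the jump conditions say that the mass flux `ρ * v` and the momentum flux
`ρ * v ^ 2 + c ^ 2 * ρ` are continuous. Eliminating the densities gives Prandtl's relation
`vl * vr = c ^ 2`: the sound speed is the geometric mean of the two relative velocities. Compression
makes both velocities positive with `vr < vl`, so the flow is subsonic behind the shock and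
supersonic ahead of it, `vr < c < vl`, which are the Lax inequalities.
-/

/-- The Rankine–Hugoniot conditions for the isothermal Euler equations with sound speed `c`, i.e.
with pressure `p ρ = c ^ 2 * ρ`, across a discontinuity of speed `σ` between the left state
`(ρl, ul)` and the right state `(ρr, ur)`. -/
structure IsothermalRankineHugoniot {R : Type*} [CommRing R] (c ρl ul ρr ur σ : R) : Prop where
  mass : σ * (ρl - ρr) = ρl * ul - ρr * ur
  momentum : σ * (ρl * ul - ρr * ur) = (ρl * ul ^ 2 + c ^ 2 * ρl) - (ρr * ur ^ 2 + c ^ 2 * ρr)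

namespace IsothermalRankineHugoniot

variable {R : Type*} [CommRing R] {c ρl ul ρr ur σ : R}

theorem massFlux_eq (h : IsothermalRankineHugoniot c ρl ul ρr ur σ) :
    ρl * (ul - σ) = ρr * (ur - σ) := by
  linear_combination -h.mass

theorem momentumFlux_eq (h : IsothermalRankineHugoniot c ρl ul ρr ur σ) :
    ρl * (ul - σ) ^ 2 + c ^ 2 * ρl = ρr * (ur - σ) ^ 2 + c ^ 2 * ρr := by
  linear_combination σ * h.mass - h.momentum

theorem prandtl_relation [NoZeroDivisors R] (h : IsothermalRankineHugoniot c ρl ul ρr ur σ)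
    (hρ : ρl ≠ ρr) : (ul - σ) * (ur - σ) = c ^ 2 := by
  apply mul_left_cancel₀ (sub_ne_zero.mpr hρ)
  linear_combination (ul - σ + (ur - σ)) * h.massFlux_eq - h.momentumFlux_eq

theorem right_relVelocity_pos [LinearOrder R] [IsStrictOrderedRing R]
    (h : IsothermalRankineHugoniot c ρl ul ρr ur σ) (hρl : 0 < ρl) (hρ : ρl < ρr) (hu : ur < ul) :
    0 < ur - σ := by
  have hflux : (ρr - ρl) * (ur - σ) = ρl * (ul - ur) := by linear_combination -h.massFlux_eq
  have hpos : 0 < (ρr - ρl) * (ur - σ) := hflux ▸ mul_pos hρl (sub_pos.mpr hu)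
  exact pos_of_mul_pos_right hpos (sub_pos.mpr hρ).le

end IsothermalRankineHugoniot

theorem lt_and_lt_of_mul_eq_sq {R : Type*} [CommRing R] [LinearOrder R] [IsStrictOrderedRing R]
    {x y c : R} (hx : 0 < x) (hxy : x < y) (hc : 0 ≤ c) (h : y * x = c ^ 2) : x < c ∧ c < y := by
  have hy : 0 < y := hx.trans hxy
  constructor
  · refine lt_of_pow_lt_pow_left₀ 2 hc ?_
    calc x ^ 2 = x * x := sq x
      _ < y * x := mul_lt_mul_of_pos_right hxy hx
      _ = c ^ 2 := h
  · refine lt_of_pow_lt_pow_left₀ 2 hy.le ?_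
    calc c ^ 2 = y * x := h.symm
      _ < y * y := mul_lt_mul_of_pos_left hxy hy
      _ = y ^ 2 := (sq y).symm

theorem stmt_12_general {R : Type*} [CommRing R] [LinearOrder R] [IsStrictOrderedRing R]
    {c ρl ul ρr ur σ : R} (h : IsothermalRankineHugoniot c ρl ul ρr ur σ) (hc : 0 ≤ c)
    (hρl : 0 < ρl) (hρ : ρl < ρr) (hu : ur < ul) : ur - c < σ ∧ σ < ul - c := by
  obtain ⟨hsubsonic, hsupersonic⟩ : ur - σ < c ∧ c < ul - σ :=
    lt_and_lt_of_mul_eq_sq (h.right_relVelocity_pos hρl hρ hu) (sub_lt_sub_right hu σ) hc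
      (h.prandtl_relation hρ.ne)
  exact ⟨sub_lt_comm.mp hsubsonic, lt_sub_comm.mp hsupersonic⟩

/-- Lax entropy inequality for the left (1-)shock: −1 < σ₋ < u_l − 1. -/
theorem stmt_12 (ρm ρl ul σ : ℝ)
    (h1 : ρm > ρl) (h2 : 0 < ρl) (h3 : 0 < ul)
    (hRH1 : σ * (ρl - ρm) = ρl * ul)
    (hRH2 : σ * (ρl * ul) = ρl * ul ^ 2 + ρl - ρm) :
    -1 < σ ∧ σ < ul - 1 := by
  have hRH : IsothermalRankineHugoniot 1 ρl ul ρm 0 σ :=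
    ⟨by linear_combination hRH1, by linear_combination hRH2⟩
  simpa only [zero_sub] using stmt_12_general hRH zero_le_one h2 h1 h3
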